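/- Under the same setup as the discounted OCP algorithm A_CP (with hyperparameter ε > 0, discount factors λ_t ∈ (0,∞), erfi-based predictions r_t, clipped gradients g*_{t,clip}, and internal statistics S*_{t,clip}, V*_{t,clip}, G*_t as defined by the algorithm), and assuming the optimal radii satisfy r*_t ≤ D for all t for some D > 0 unknown to the algorithm, the following discounted coverage bound holds for all T ∈ ℕ_+: |S*_T| ≤ 2·√(V*_T)·(1 + √(log(1 + 2D·ε^{-1}))) + 15·G*_T·(1 + √(log(1 + 2D·ε^{-1})))², where S*_T := −Σ_{i=1}^T (∏_{j=i}^{T-1} λ_j)·g*_i and V*_T := Σ_{i=1}^T (∏_{j=i}^{T-1} λ_j²)·(g*_i)². -/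

import Mathlib

open scoped BigOperators

/-- The (rescaled) imaginary error function `erfi(x) = ∫₀ˣ exp(u²) du`. -/
noncomputable def erfi (x : ℝ) : ℝ := ∫ u in (0:ℝ)..x, Real.exp (u^2)

/-!
The cumulated clipping error in `S*` telescopes to at most `G*`, so it suffices to bound the
clipped statistic `S`. The prediction is designed so that `S` is trapped. When `S ≤ 2G`, the
prediction and hence the feedback are nonpositive, while a larger `S` survives a clipped step, so
`S` never becomes negative. When `S` exceeds `2L√Q`, where `Q = V + 2GS + 16G²` and
`L = 1 + √log(1 + 2D/ε)`, the prediction exceeds `D`, the feedback is nonnegative, and `S` does not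
grow beyond its discounted value. Otherwise `S² ≤ 4L²Q` is a quadratic inequality in `S` that
gives `S ≤ 2√V L + 13GL²`, and one more round adds at most `G`.
-/

section Erfi

lemma intervalIntegrable_exp_sq (a b : ℝ) :
    IntervalIntegrable (fun u : ℝ => Real.exp (u ^ 2)) MeasureTheory.volume a b :=
  Continuous.intervalIntegrable (by fun_prop) a b

lemma hasDerivAt_exp_sq (x : ℝ) :
    HasDerivAt (fun y : ℝ => Real.exp (y ^ 2)) (2 * x * Real.exp (x ^ 2)) x := by
  simpa [mul_comm] using (hasDerivAt_pow 2 x).exp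

lemma hasDerivAt_erfi (x : ℝ) : HasDerivAt erfi (Real.exp (x ^ 2)) x :=
  ((by fun_prop : Continuous fun u : ℝ => Real.exp (u ^ 2)).integral_hasStrictDerivAt
    0 x).hasDerivAt

lemma erfi_le_mul_exp_sq {x : ℝ} (hx : 0 ≤ x) : erfi x ≤ x * Real.exp (x ^ 2) :=
  calc erfi x ≤ ∫ _ in (0 : ℝ)..x, Real.exp (x ^ 2) :=
        intervalIntegral.integral_mono_on hx (intervalIntegrable_exp_sq 0 x)
          intervalIntegrable_const fun u hu => by
            have := hu.1
            gcongr
            exact hu.2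
    _ = x * Real.exp (x ^ 2) := by simp

lemma le_erfi_self {x : ℝ} (hx : 0 ≤ x) : x ≤ erfi x :=
  calc x = ∫ _ in (0 : ℝ)..x, (1 : ℝ) := by simp
    _ ≤ erfi x :=
        intervalIntegral.integral_mono_on hx intervalIntegrable_const
          (intervalIntegrable_exp_sq 0 x) fun u _ => Real.one_le_exp (sq_nonneg u)

lemma hasDerivAt_erfi_sub_exp_sq_div {x : ℝ} (hx : x ≠ 0) :
    HasDerivAt (fun x => erfi x - Real.exp (x ^ 2) / (4 * x))
      (Real.exp (x ^ 2) * (1 / 2 + 1 / (4 * x ^ 2))) x := by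
  refine ((hasDerivAt_erfi x).sub ((hasDerivAt_exp_sq x).div
    ((hasDerivAt_id x).const_mul 4) (by simpa using hx))).congr_deriv ?_
  simp only [id]
  field_simp
  ring

lemma mul_exp_sq_le_exp_one_add_sq_div_two (y : ℝ) :
    y * Real.exp (y ^ 2) ≤ Real.exp ((1 + y) ^ 2) / 2 := by
  have hlin : 2 * y ≤ Real.exp (1 + 2 * y) := by linarith [Real.add_one_le_exp (1 + 2 * y)]
  calc y * Real.exp (y ^ 2) = 2 * y * Real.exp (y ^ 2) / 2 := by ring
    _ ≤ Real.exp (1 + 2 * y) * Real.exp (y ^ 2) / 2 := by gcongr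
    _ = Real.exp ((1 + y) ^ 2) / 2 := by rw [← Real.exp_add]; ring_nf

lemma exp_sq_sub_one_div_two_lt_erfi_one_add_sub {y : ℝ} (hy : 0 ≤ y) :
    (Real.exp (y ^ 2) - 1) / 2 < erfi (1 + y) - Real.exp ((1 + y) ^ 2) / (4 * (1 + y)) := by
  let gap : ℝ → ℝ := fun y =>
    erfi (1 + y) - Real.exp ((1 + y) ^ 2) / (4 * (1 + y)) - (Real.exp (y ^ 2) - 1) / 2
  have hderiv : ∀ y, 0 ≤ y → HasDerivAt gap
      (Real.exp ((1 + y) ^ 2) * (1 / 2 + 1 / (4 * (1 + y) ^ 2))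
        - 2 * y * Real.exp (y ^ 2) / 2) y := fun y hy =>
    ((hasDerivAt_erfi_sub_exp_sq_div (by positivity)).comp_const_add 1 y).sub
      (((hasDerivAt_exp_sq y).sub_const 1).div_const 2)
  have hmono : MonotoneOn gap (Set.Ici 0) := by
    refine monotoneOn_of_hasDerivWithinAt_nonneg (convex_Ici 0)
      (fun y hy => (hderiv y hy).continuousAt.continuousWithinAt)
      (fun y hy => (hderiv y (interior_subset hy)).hasDerivWithinAt) fun y _ => ?_
    have hrem : 0 ≤ Real.exp ((1 + y) ^ 2) * (1 / (4 * (1 + y) ^ 2)) := by positivity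
    linarith [mul_exp_sq_le_exp_one_add_sq_div_two y]
  have hgap_zero : 0 < gap 0 := by
    simp only [gap, add_zero, one_pow, mul_one, ne_eq, OfNat.ofNat_ne_zero, not_false_eq_true,
      zero_pow, Real.exp_zero, sub_self, zero_div, sub_zero]
    linarith [le_erfi_self zero_le_one, Real.exp_one_lt_d9]
  exact sub_pos.1 (hgap_zero.trans_le (hmono Set.self_mem_Ici hy hy))

end Erfi

section Clip

variable {α : Type*} [AddCommGroup α] [LinearOrder α]

/-- The projection of `x` onto `[-M, M]`, meaningful for `0 ≤ M`. -/
def clip (M x : α) : α := max (-M) (min x M)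

variable {M x : α}

lemma clip_nonneg (hM : 0 ≤ M) (hx : 0 ≤ x) : 0 ≤ clip M x :=
  le_max_of_le_right (le_min hx hM)

variable [IsOrderedAddMonoid α]

lemma abs_clip (hM : 0 ≤ M) (x : α) : |clip M x| = min |x| M := by
  unfold clip
  grind

lemma clip_nonpos (hM : 0 ≤ M) (hx : x ≤ 0) : clip M x ≤ 0 :=
  max_le (neg_nonpos.2 hM) ((min_le_left x M).trans hx)

lemma abs_sub_clip (hM : 0 ≤ M) (x : α) : |x - clip M x| = max M |x| - M := by
  unfold clip
  grind

end Clip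

section DiscountedSum

variable {R : Type*} [CommSemiring R]

/-- The sum of `a 1, …, a t` in which the term `a i` has been discounted by the factors
`w i, …, w (t - 1)` of the later rounds. It encodes both `S*` and `V*`. -/
def discountedSum (w a : ℕ → R) (t : ℕ) : R :=
  ∑ i ∈ Finset.Icc 1 t, (∏ j ∈ Finset.Icc i (t - 1), w j) * a i

lemma discountedSum_zero (w a : ℕ → R) : discountedSum w a 0 = 0 := by
  simp [discountedSum]

lemma discountedSum_succ (w a : ℕ → R) (t : ℕ) :
    discountedSum w a (t + 1) = w t * discountedSum w a t + a (t + 1) := by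
  have hprod : ∀ i ∈ Finset.Icc 1 t, (∏ j ∈ Finset.Icc i t, w j) * a i
      = w t * ((∏ j ∈ Finset.Icc i (t - 1), w j) * a i) := by
    intro i hi
    obtain ⟨hi₁, hit⟩ := Finset.mem_Icc.1 hi
    obtain ⟨s, rfl⟩ := Nat.exists_eq_add_of_le' (hi₁.trans hit)
    rw [Finset.prod_Icc_succ_top hit, Nat.add_sub_cancel]
    ring
  simp only [discountedSum]
  rw [Finset.sum_Icc_succ_top (Nat.le_add_left 1 t), Nat.add_sub_cancel, Finset.mul_sum,
    Finset.sum_congr rfl hprod, Finset.Icc_eq_empty (Nat.not_succ_le_self t), Finset.prod_empty,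
    one_mul]

end DiscountedSum

section Subgradient

variable {s : Set ℝ} {f : ℝ → ℝ} {g x x₀ : ℝ}

lemma subgradient_mul_minimizer_sub_nonpos (hx : x ∈ s) (hx₀ : x₀ ∈ s)
    (hmin : ∀ y ∈ s, f x₀ ≤ f y) (hsub : ∀ y ∈ s, f x + g * (y - x) ≤ f y) :
    g * (x₀ - x) ≤ 0 := by
  linarith [hmin x hx, hsub x₀ hx₀]

lemma subgradient_nonpos_of_lt_minimizer (hx : x ∈ s) (hx₀ : x₀ ∈ s)
    (hmin : ∀ y ∈ s, f x₀ ≤ f y) (hsub : ∀ y ∈ s, f x + g * (y - x) ≤ f y) (hlt : x < x₀) :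
    g ≤ 0 :=
  nonpos_of_mul_nonpos_left (subgradient_mul_minimizer_sub_nonpos hx hx₀ hmin hsub)
    (sub_pos.2 hlt)

lemma subgradient_nonneg_of_minimizer_lt (hx : x ∈ s) (hx₀ : x₀ ∈ s)
    (hmin : ∀ y ∈ s, f x₀ ≤ f y) (hsub : ∀ y ∈ s, f x + g * (y - x) ≤ f y) (hlt : x₀ < x) :
    0 ≤ g := by
  by_contra! hg
  exact (mul_pos_of_neg_of_neg hg (sub_neg.2 hlt)).not_ge
    (subgradient_mul_minimizer_sub_nonpos hx hx₀ hmin hsub)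

end Subgradient

section Prediction

/-- The quantity `Q` under the square roots in the prediction of `A_CP`. -/
def regularizedVariance (G S V : ℝ) : ℝ := V + 2 * G * S + 16 * G ^ 2

/-- The unconstrained prediction `r̃` of `A_CP` from its current statistics. -/
noncomputable def predictedRadius (ε G S V : ℝ) : ℝ :=
  if G = 0 then 0 else
    ε * erfi (S / (2 * √(regularizedVariance G S V)))
      - ε * G / √(regularizedVariance G S V)
        * Real.exp (S ^ 2 / (4 * regularizedVariance G S V))

/-- The threshold `L` such that the prediction exceeds `D` as soon as the argument of `erfi` in it
exceeds `L`. -/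
noncomputable def coverageLevel (ε D : ℝ) : ℝ := 1 + √(Real.log (1 + 2 * D * ε⁻¹))

variable {ε D G S V : ℝ}

lemma one_le_coverageLevel (ε D : ℝ) : 1 ≤ coverageLevel ε D :=
  le_add_of_nonneg_right (Real.sqrt_nonneg _)

lemma two_mul_div_le_exp_sq_sub_one (hε : 0 < ε) (hD : 0 ≤ D) {y : ℝ}
    (hy : coverageLevel ε D ≤ 1 + y) : 2 * D / ε ≤ Real.exp (y ^ 2) - 1 := by
  have hpos : 0 < 1 + 2 * D * ε⁻¹ := by positivity
  have hlog : Real.log (1 + 2 * D * ε⁻¹) ≤ y ^ 2 :=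
    Real.sqrt_le_iff.1 (add_le_add_iff_left 1 |>.1 hy) |>.2
  rw [div_eq_mul_inv]
  linarith [(Real.log_le_iff_le_exp hpos).1 hlog]

lemma predictedRadius_of_ne_zero (hG : G ≠ 0) (hQ : 0 ≤ regularizedVariance G S V) :
    predictedRadius ε G S V =
      ε * (erfi (S / (2 * √(regularizedVariance G S V)))
        - G / √(regularizedVariance G S V)
          * Real.exp ((S / (2 * √(regularizedVariance G S V))) ^ 2)) := by
  have harg : (S / (2 * √(regularizedVariance G S V))) ^ 2
      = S ^ 2 / (4 * regularizedVariance G S V) := by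
    rw [div_pow, mul_pow, Real.sq_sqrt hQ]
    norm_num
  rw [predictedRadius, if_neg hG, harg]
  ring

lemma predictedRadius_nonpos (hε : 0 ≤ ε) (hV : 0 ≤ V) (hS : 0 ≤ S) (hSG : S ≤ 2 * G) :
    predictedRadius ε G S V ≤ 0 := by
  have hG : 0 ≤ G := by linarith
  by_cases hG₀ : G = 0
  · rw [predictedRadius, if_pos hG₀]
  rw [predictedRadius_of_ne_zero hG₀ (by unfold regularizedVariance; positivity)]
  set q := √(regularizedVariance G S V)
  have hx : S / (2 * q) ≤ G / q := by
    rw [← div_div]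
    gcongr
    linarith
  refine mul_nonpos_of_nonneg_of_nonpos hε (sub_nonpos.2 ?_)
  calc erfi (S / (2 * q)) ≤ S / (2 * q) * Real.exp ((S / (2 * q)) ^ 2) :=
        erfi_le_mul_exp_sq (by positivity)
    _ ≤ G / q * Real.exp ((S / (2 * q)) ^ 2) := by gcongr

lemma div_sqrt_regularizedVariance_le (hG : 0 < G) (hV : 0 ≤ V) (hS : 0 < S) :
    G / √(regularizedVariance G S V)
      ≤ 1 / (4 * (S / (2 * √(regularizedVariance G S V)))) := by
  have hQ : 2 * G * S ≤ regularizedVariance G S V := by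
    unfold regularizedVariance
    nlinarith
  have hQ₀ : 0 < regularizedVariance G S V := (by positivity : 0 < 2 * G * S).trans_le hQ
  have hq := Real.sqrt_pos.2 hQ₀
  rw [← Real.sq_sqrt hQ₀.le] at hQ
  rw [div_le_div_iff₀ hq (by positivity)]
  field_simp
  linarith

lemma lt_predictedRadius (hε : 0 < ε) (hD : 0 ≤ D) (hG : 0 < G) (hV : 0 ≤ V) (hS : 0 ≤ S)
    (hlarge : (2 * coverageLevel ε D) ^ 2 * regularizedVariance G S V < S ^ 2) :
    D < predictedRadius ε G S V := by
  have hQ : 0 < regularizedVariance G S V := by unfold regularizedVariance; positivity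
  have hS₀ : 0 < S := hS.lt_of_ne' fun h => by
    rw [h, zero_pow two_ne_zero] at hlarge
    exact hlarge.not_ge (by rw [h] at hQ; positivity)
  rw [predictedRadius_of_ne_zero hG.ne' hQ.le]
  have hbonus := div_sqrt_regularizedVariance_le hG hV hS₀
  have hq := Real.sqrt_pos.2 hQ
  have hLq : 2 * coverageLevel ε D * √(regularizedVariance G S V) < S :=
    lt_of_pow_lt_pow_left₀ 2 hS (by rwa [mul_pow, Real.sq_sqrt hQ.le])
  set q := √(regularizedVariance G S V)
  obtain ⟨y, hy⟩ : ∃ y, S / (2 * q) = 1 + y := ⟨S / (2 * q) - 1, by ring⟩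
  have hLy : coverageLevel ε D ≤ 1 + y := by
    rw [← hy, le_div_iff₀ (by positivity)]
    linarith
  have hy₀ : 0 ≤ y := by linarith [one_le_coverageLevel ε D]
  rw [hy] at hbonus ⊢
  rw [mul_comm, ← div_lt_iff₀ hε]
  calc D / ε = 2 * D / ε / 2 := by ring
    _ ≤ (Real.exp (y ^ 2) - 1) / 2 := by
        gcongr
        exact two_mul_div_le_exp_sq_sub_one hε hD hLy
    _ < erfi (1 + y) - Real.exp ((1 + y) ^ 2) / (4 * (1 + y)) :=
        exp_sq_sub_one_div_two_lt_erfi_one_add_sub hy₀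
    _ = erfi (1 + y) - 1 / (4 * (1 + y)) * Real.exp ((1 + y) ^ 2) := by ring
    _ ≤ erfi (1 + y) - G / q * Real.exp ((1 + y) ^ 2) := by gcongr

lemma le_of_sq_le_mul_regularizedVariance {L : ℝ} (hL : 1 ≤ L) (hG : 0 ≤ G) (hV : 0 ≤ V)
    (hS : S ^ 2 ≤ (2 * L) ^ 2 * regularizedVariance G S V) :
    S ≤ 2 * √V * L + 13 * G * L ^ 2 := by
  have : 0 ≤ L := zero_le_one.trans hL
  have hpow : G ^ 2 * L ^ 2 ≤ G ^ 2 * L ^ 4 := by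
    gcongr ?_ * ?_
    exact pow_le_pow_right₀ hL (by norm_num)
  -- Completing the square: `(S - 4GL²)² ≤ 4L²V + 64G²L² + 16G²L⁴`, and `64 + 16 ≤ 9²`.
  have hsq : (S - 4 * G * L ^ 2) ^ 2 ≤ (2 * √V * L + 9 * G * L ^ 2) ^ 2 := by
    have hcross : 0 ≤ √V * L * (G * L ^ 2) := by positivity
    have hG4 : 0 ≤ G ^ 2 * L ^ 4 := by positivity
    calc (S - 4 * G * L ^ 2) ^ 2
        ≤ (2 * L) ^ 2 * regularizedVariance G S V - 8 * G * L ^ 2 * S + 16 * (G ^ 2 * L ^ 4) := by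
          linarith
      _ = 4 * L ^ 2 * √V ^ 2 + 64 * (G ^ 2 * L ^ 2) + 16 * (G ^ 2 * L ^ 4) := by
          rw [regularizedVariance, Real.sq_sqrt hV]
          ring
      _ ≤ 4 * L ^ 2 * √V ^ 2 + 36 * (√V * L * (G * L ^ 2)) + 81 * (G ^ 2 * L ^ 4) := by linarith
      _ = (2 * √V * L + 9 * G * L ^ 2) ^ 2 := by ring
  linarith [le_of_sq_le_sq hsq (by positivity)]

end Prediction

/-- The sequences `S`, `V`, `G` are the internal statistics that `A_CP` maintains with discount
factors `lam` on the feedback `g 1, g 2, …`. -/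
structure IsClippedStatistics (lam g S V G : ℕ → ℝ) : Prop where
  S_zero : S 0 = 0
  V_zero : V 0 = 0
  G_zero : G 0 = 0
  S_succ : ∀ t, S (t + 1) = lam t * S t - clip (lam t * G t) (g (t + 1))
  V_succ : ∀ t, V (t + 1) = lam t ^ 2 * V t + clip (lam t * G t) (g (t + 1)) ^ 2
  G_succ : ∀ t, G (t + 1) = max (lam t * G t) |g (t + 1)|

namespace IsClippedStatistics

variable {ε D : ℝ} {lam g S V G : ℕ → ℝ}

lemma G_nonneg (h : IsClippedStatistics lam g S V G) : ∀ t, 0 ≤ G t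
  | 0 => h.G_zero.ge
  | t + 1 => by
    rw [h.G_succ]
    exact le_max_of_le_right (abs_nonneg _)

lemma mul_G_le_G_succ (h : IsClippedStatistics lam g S V G) (t : ℕ) :
    lam t * G t ≤ G (t + 1) :=
  (le_max_left _ _).trans_eq (h.G_succ t).symm

lemma V_nonneg (h : IsClippedStatistics lam g S V G) (t : ℕ) : 0 ≤ V t := by
  induction t with
  | zero => exact h.V_zero.ge
  | succ t ih =>
    rw [h.V_succ]
    positivity

lemma mul_sqrt_V_le_sqrt_V_succ (h : IsClippedStatistics lam g S V G) (t : ℕ) :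
    lam t * √(V t) ≤ √(V (t + 1)) := by
  apply Real.le_sqrt_of_sq_le
  rw [mul_pow, Real.sq_sqrt (h.V_nonneg t), h.V_succ]
  exact le_add_of_nonneg_right (sq_nonneg _)

lemma mul_envelope_le_envelope_succ (h : IsClippedStatistics lam g S V G) {L c : ℝ} (hL : 0 ≤ L)
    (hc : 0 ≤ c) (t : ℕ) :
    lam t * (2 * √(V t) * L + c * G t * L ^ 2)
      ≤ 2 * √(V (t + 1)) * L + c * G (t + 1) * L ^ 2 :=
  calc lam t * (2 * √(V t) * L + c * G t * L ^ 2)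
      = 2 * (lam t * √(V t)) * L + c * (lam t * G t) * L ^ 2 := by ring
    _ ≤ 2 * √(V (t + 1)) * L + c * G (t + 1) * L ^ 2 := by
        gcongr
        · exact h.mul_sqrt_V_le_sqrt_V_succ t
        · exact h.mul_G_le_G_succ t

section

variable (h : IsClippedStatistics lam g S V G) (hlam : ∀ t, 0 ≤ lam t)
include h hlam

lemma mul_G_nonneg (t : ℕ) : 0 ≤ lam t * G t := mul_nonneg (hlam t) (h.G_nonneg t)

lemma abs_clip_le_mul_G (t : ℕ) : |clip (lam t * G t) (g (t + 1))| ≤ lam t * G t :=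
  (abs_clip (h.mul_G_nonneg hlam t) _).trans_le (min_le_right _ _)

lemma V_le_discountedSum (t : ℕ) :
    V t ≤ discountedSum (fun j => lam j ^ 2) (fun i => g i ^ 2) t := by
  induction t with
  | zero => rw [h.V_zero, discountedSum_zero]
  | succ t ih =>
    rw [h.V_succ, discountedSum_succ]
    have hclip : clip (lam t * G t) (g (t + 1)) ^ 2 ≤ g (t + 1) ^ 2 :=
      sq_le_sq.2 ((abs_clip (h.mul_G_nonneg hlam t) _).trans_le (min_le_left _ _))
    gcongr

lemma abs_neg_discountedSum_sub_S_le (t : ℕ) : |-discountedSum lam g t - S t| ≤ G t := by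
  induction t with
  | zero => simp [discountedSum_zero, h.S_zero, h.G_zero]
  | succ t ih =>
    set c := clip (lam t * G t) (g (t + 1)) with hc
    calc |-discountedSum lam g (t + 1) - S (t + 1)|
        = |lam t * (-discountedSum lam g t - S t) - (g (t + 1) - c)| := by
          rw [discountedSum_succ, h.S_succ, ← hc]
          congr 1
          ring
      _ ≤ lam t * |-discountedSum lam g t - S t| + |g (t + 1) - c| := by
          simpa only [abs_mul, abs_of_nonneg (hlam t)] using
            abs_sub (lam t * (-discountedSum lam g t - S t)) (g (t + 1) - c)
      _ ≤ lam t * G t + (G (t + 1) - lam t * G t) := by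
          -- The clipping error of a round is the increment of `G` over its discounted value.
          rw [abs_sub_clip (h.mul_G_nonneg hlam t), ← h.G_succ]
          gcongr
          exact hlam t
      _ = G (t + 1) := by ring

lemma S_nonneg (hε : 0 ≤ ε)
    (hneg : ∀ t, predictedRadius ε (G t) (S t) (V t) ≤ 0 → g (t + 1) ≤ 0) (t : ℕ) :
    0 ≤ S t := by
  induction t with
  | zero => exact h.S_zero.ge
  | succ t ih =>
    rw [h.S_succ, sub_nonneg]
    rcases le_total (S t) (2 * G t) with hsmall | hlarge
    · exact (clip_nonpos (h.mul_G_nonneg hlam t)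
        (hneg t (predictedRadius_nonpos hε (h.V_nonneg t) ih hsmall))).trans
        (mul_nonneg (hlam t) ih)
    · calc clip (lam t * G t) (g (t + 1)) ≤ lam t * G t :=
            (le_abs_self _).trans (h.abs_clip_le_mul_G hlam t)
        _ ≤ lam t * S t :=
            mul_le_mul_of_nonneg_left (by linarith [h.G_nonneg t]) (hlam t)

lemma S_le (hε : 0 < ε) (hD : 0 ≤ D) (hS : ∀ t, 0 ≤ S t)
    (hpos : ∀ t, D < predictedRadius ε (G t) (S t) (V t) → 0 ≤ g (t + 1)) (t : ℕ) :
    S t ≤ 2 * √(V t) * coverageLevel ε D + 14 * G t * coverageLevel ε D ^ 2 := by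
  have hL := one_le_coverageLevel ε D
  induction t with
  | zero => simp [h.S_zero, h.V_zero, h.G_zero]
  | succ t ih =>
    refine le_trans ?_
      (h.mul_envelope_le_envelope_succ (zero_le_one.trans hL) (by norm_num) t)
    rw [h.S_succ]
    set L := coverageLevel ε D
    have hclip := abs_le.1 (h.abs_clip_le_mul_G hlam t)
    rcases le_or_gt (S t ^ 2) ((2 * L) ^ 2 * regularizedVariance (G t) (S t) (V t))
      with hsmall | hlarge
    · have hquad :=
        le_of_sq_le_mul_regularizedVariance hL (h.G_nonneg t) (h.V_nonneg t) hsmall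
      have hGL : G t ≤ G t * L ^ 2 := le_mul_of_one_le_right (h.G_nonneg t) (one_le_pow₀ hL)
      calc lam t * S t - clip (lam t * G t) (g (t + 1)) ≤ lam t * (S t + G t) := by linarith
        _ ≤ lam t * (2 * √(V t) * L + 14 * G t * L ^ 2) :=
            mul_le_mul_of_nonneg_left (by linarith) (hlam t)
    · have hclip_nonneg : 0 ≤ clip (lam t * G t) (g (t + 1)) := by
        rcases (h.G_nonneg t).eq_or_lt with hG | hG
        · simpa [← hG] using hclip.1
        · exact clip_nonneg (h.mul_G_nonneg hlam t)
            (hpos t (lt_predictedRadius hε hD hG (h.V_nonneg t) (hS t) hlarge))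
      exact (sub_le_self _ hclip_nonneg).trans (mul_le_mul_of_nonneg_left ih (hlam t))

end

end IsClippedStatistics

theorem ocp_coverage_bound_main_general {ε D : ℝ} (hε : 0 < ε) (hD : 0 ≤ D)
    {lam g S V G : ℕ → ℝ} (hlam : ∀ t, 0 ≤ lam t) (h : IsClippedStatistics lam g S V G)
    (hneg : ∀ t, predictedRadius ε (G t) (S t) (V t) ≤ 0 → g (t + 1) ≤ 0)
    (hpos : ∀ t, D < predictedRadius ε (G t) (S t) (V t) → 0 ≤ g (t + 1)) (T : ℕ) :
    |-discountedSum lam g T|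
      ≤ 2 * √(discountedSum (fun j => lam j ^ 2) (fun i => g i ^ 2) T) * coverageLevel ε D
        + 15 * G T * coverageLevel ε D ^ 2 := by
  have hL := one_le_coverageLevel ε D
  have hS := h.S_nonneg hlam hε.le hneg
  set L := coverageLevel ε D
  calc |-discountedSum lam g T| ≤ |-discountedSum lam g T - S T| + |S T| := by
        simpa using abs_add_le (-discountedSum lam g T - S T) (S T)
    _ ≤ G T + (2 * √(V T) * L + 14 * G T * L ^ 2) := by
        rw [abs_of_nonneg (hS T)]
        exact add_le_add (h.abs_neg_discountedSum_sub_S_le hlam T) (h.S_le hlam hε hD hS hpos T)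
    _ ≤ G T * L ^ 2
          + (2 * √(discountedSum (fun j => lam j ^ 2) (fun i => g i ^ 2) T) * L
            + 14 * G T * L ^ 2) := by
        gcongr
        · exact le_mul_of_one_le_right (h.G_nonneg T) (one_le_pow₀ hL)
        · exact h.V_le_discountedSum hlam T
    _ = _ := by ring

/-- Discounted coverage bound of `A_CP` with unclipped variance: if the optimal
radii are bounded by `D` (unknown to the algorithm), then for all `T ≥ 1`,
`|S*_T| ≤ 2√(V*_T)(1+√log(1+2D/ε)) + 15·G*_T·(1+√log(1+2D/ε))²`. -/
theorem ocp_coverage_bound_main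
    (eps : ℝ) (heps : 0 < eps)
    (lam : ℕ → ℝ) (hlam : ∀ t, 0 < lam t) (hlam0 : lam 0 = 1)
    (f : ℕ → ℝ → ℝ) (rstar : ℕ → ℝ)
    (Sc Vc Gs rt r gs gclip : ℕ → ℝ)
    (hSc0 : Sc 0 = 0) (hVc0 : Vc 0 = 0) (hGs0 : Gs 0 = 0)
    (hrt : ∀ t, 1 ≤ t →
      (Gs (t-1) = 0 → rt t = 0) ∧
      (Gs (t-1) ≠ 0 → rt t =
        eps * erfi (Sc (t-1) /
          (2 * Real.sqrt (Vc (t-1) + 2 * Gs (t-1) * Sc (t-1) + 16 * (Gs (t-1))^2)))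
        - eps * Gs (t-1) / Real.sqrt (Vc (t-1) + 2 * Gs (t-1) * Sc (t-1) + 16 * (Gs (t-1))^2)
          * Real.exp ((Sc (t-1))^2 /
            (4 * (Vc (t-1) + 2 * Gs (t-1) * Sc (t-1) + 16 * (Gs (t-1))^2)))))
    (hr : ∀ t, 1 ≤ t → r t = max (rt t) 0)
    (hfconv : ∀ t, ConvexOn ℝ (Set.Ici 0) (f t))
    (hrstar : ∀ t, 0 ≤ rstar t)
    (hmin : ∀ t, ∀ y ∈ Set.Ici (0:ℝ), f t (rstar t) ≤ f t y)
    (hsub : ∀ t, 1 ≤ t → ∀ y ∈ Set.Ici (0:ℝ), f t (r t) + gs t * (y - r t) ≤ f t y)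
    (hneg : ∀ t, 1 ≤ t → r t = rstar t → gs t ≤ 0)
    (hclip : ∀ t, 1 ≤ t →
      gclip t = max (-(lam (t-1) * Gs (t-1))) (min (gs t) (lam (t-1) * Gs (t-1))))
    (hScrec : ∀ t, 1 ≤ t → Sc t = lam (t-1) * Sc (t-1) - gclip t)
    (hVcrec : ∀ t, 1 ≤ t → Vc t = (lam (t-1))^2 * Vc (t-1) + (gclip t)^2)
    (hGsrec : ∀ t, 1 ≤ t → Gs t = max (lam (t-1) * Gs (t-1)) |gs t|)
    (Sstar : ℕ → ℝ)
    (hSstar : ∀ t, Sstar t = -∑ i ∈ Finset.Icc 1 t, (∏ j ∈ Finset.Icc i (t-1), lam j) * gs i)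
    (D : ℝ) (hD : 0 < D) (hrstarD : ∀ t, rstar t ≤ D)
    (Vstar : ℕ → ℝ)
    (hVstar : ∀ t, Vstar t =
      ∑ i ∈ Finset.Icc 1 t, (∏ j ∈ Finset.Icc i (t-1), (lam j)^2) * (gs i)^2) :
    ∀ T, 1 ≤ T →
      |Sstar T| ≤ 2 * Real.sqrt (Vstar T)
          * (1 + Real.sqrt (Real.log (1 + 2 * D * eps⁻¹)))
        + 15 * Gs T * (1 + Real.sqrt (Real.log (1 + 2 * D * eps⁻¹)))^2 := by
  intro T _
  have hstats : IsClippedStatistics lam gs Sc Vc Gs :=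
    { S_zero := hSc0
      V_zero := hVc0
      G_zero := hGs0
      S_succ := fun t => (hScrec (t + 1) t.succ_pos).trans (by rw [hclip _ t.succ_pos]; rfl)
      V_succ := fun t => (hVcrec (t + 1) t.succ_pos).trans (by rw [hclip _ t.succ_pos]; rfl)
      G_succ := fun t => hGsrec (t + 1) t.succ_pos }
  have hpred : ∀ t, rt (t + 1) = predictedRadius eps (Gs t) (Sc t) (Vc t) := fun t => by
    unfold predictedRadius
    split_ifs with hG
    exacts [(hrt _ t.succ_pos).1 hG, (hrt _ t.succ_pos).2 hG]
  have hr_mem : ∀ t, r (t + 1) ∈ Set.Ici 0 := fun t =>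
    (le_max_right _ _).trans_eq (hr _ t.succ_pos).symm
  rw [hSstar, hVstar]
  refine ocp_coverage_bound_main_general heps hD.le (fun t => (hlam t).le) hstats
    (fun t hle => ?_) (fun t hlt => ?_) T
  · have hr_le : r (t + 1) ≤ rstar (t + 1) := (hr _ t.succ_pos).trans_le
      (max_le (((hpred t).trans_le hle).trans (hrstar _)) (hrstar _))
    exact hr_le.eq_or_lt.elim (hneg _ t.succ_pos) (subgradient_nonpos_of_lt_minimizer
      (hr_mem t) (hrstar _) (hmin _) (hsub _ t.succ_pos))
  · exact subgradient_nonneg_of_minimizer_lt (hr_mem t) (hrstar _) (hmin _) (hsub _ t.succ_pos)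
      (((hrstarD _).trans_lt (hlt.trans_eq (hpred t).symm)).trans_le
        ((le_max_left _ _).trans_eq (hr _ t.succ_pos).symm))
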